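/- arXiv:1209.0213 — 7 statements merged into one kernel-verified Lean document; each statement's English description precedes it below -/
import Mathlib

section
/- As a function of the tortoise coordinate, V₂ falls off like s⁻² at both ends: lim_{ρ→∞} V₂(ρ)·s(ρ)² = 1 and lim_{ρ→0⁺} V₂(ρ)·s(ρ)² = 1. -/
/-!
In the scaled variable `x = ρ/m` the product `V₂ s²` is
`((x² - 1 + 2 x log x) / (1 + x)²)²`. This expression is invariant under `x ↦ 1/x`, which exchanges
the two ends, so it equals `profile (ρ/m)` and also `profile (m/ρ)`. Both limits therefore reduce
to the continuity of `profile` at `0`, where `x log x` vanishes and the value is `1`.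
-/

open Filter Topology

/-- The tortoise radial coordinate `s(ρ) = ρ - m²/ρ + 2m·log(ρ/m)`. -/
noncomputable def tortoise (m ρ : ℝ) : ℝ := ρ - m ^ 2 / ρ + 2 * m * Real.log (ρ / m)

/-- The potential `V₂(ρ) = ρ²/(ρ+m)⁴`. -/
noncomputable def V2 (m ρ : ℝ) : ℝ := ρ ^ 2 / (ρ + m) ^ 4

/-- The product `V₂ s²` as a function of the scaled radius `x = ρ/m`. Since `Real.log 0 = 0`, the
value at `x = 0` is `1`, which is the continuous extension. -/
noncomputable def profile (x : ℝ) : ℝ := ((x ^ 2 - 1 + 2 * (x * Real.log x)) / (1 + x) ^ 2) ^ 2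

lemma tendsto_profile_zero : Tendsto profile (𝓝 0) (𝓝 1) := by
  have h : ContinuousAt profile 0 := by
    unfold profile
    have h1 : ContinuousAt (fun x : ℝ => x * Real.log x) 0 := Real.continuous_mul_log.continuousAt
    refine ContinuousAt.pow (ContinuousAt.div ?_ (by fun_prop) (by norm_num)) 2
    exact ContinuousAt.add (by fun_prop) (continuousAt_const.mul h1)
  have h0 : profile 0 = 1 := by norm_num [profile]
  simpa only [ContinuousAt, h0] using h

lemma V2_mul_tortoise_sq {m ρ : ℝ} (hm : 0 < m) (hρ : 0 < ρ) :
    V2 m ρ * tortoise m ρ ^ 2 = profile (ρ / m) := by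
  have h : 1 + ρ / m ≠ 0 := by positivity
  have h' : ρ + m ≠ 0 := by positivity
  have h'' : m + ρ ≠ 0 := by positivity
  unfold V2 tortoise profile
  generalize Real.log (ρ / m) = L
  field_simp
  ring

/-- The inversion symmetry exchanging the horizon `x = 0` and spatial infinity. -/
lemma profile_inv {x : ℝ} (hx : 0 < x) : profile x⁻¹ = profile x := by
  have h : 1 + x ≠ 0 := by positivity
  have h' : x + 1 ≠ 0 := by positivity
  unfold profile
  rw [Real.log_inv]
  generalize Real.log x = L
  field_simp
  ring

/-- As a function of the tortoise coordinate, `V₂` falls off like `s⁻²` at both ends: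
`lim_{ρ→∞} V₂(ρ)·s(ρ)² = 1` and `lim_{ρ→0⁺} V₂(ρ)·s(ρ)² = 1`. -/
theorem V2_falloff (m : ℝ) (hm : 0 < m) :
    Tendsto (fun ρ : ℝ => V2 m ρ * tortoise m ρ ^ 2) atTop (𝓝 1) ∧
    Tendsto (fun ρ : ℝ => V2 m ρ * tortoise m ρ ^ 2) (𝓝[>] 0) (𝓝 1) := by
  constructor
  · have hlim : Tendsto (fun ρ : ℝ => (ρ / m)⁻¹) atTop (𝓝 0) :=
      tendsto_inv_atTop_zero.comp (tendsto_id.atTop_div_const hm)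
    refine (tendsto_profile_zero.comp hlim).congr' ?_
    filter_upwards [eventually_gt_atTop 0] with ρ hρ
    rw [V2_mul_tortoise_sq hm hρ, Function.comp_apply, profile_inv (div_pos hρ hm)]
  · have hlim : Tendsto (fun ρ : ℝ => ρ / m) (𝓝[>] 0) (𝓝 0) := by
      have h : ContinuousAt (fun ρ : ℝ => ρ / m) 0 := by fun_prop
      simpa [ContinuousAt] using h.mono_left nhdsWithin_le_nhds
    refine (tendsto_profile_zero.comp hlim).congr' ?_
    filter_upwards [self_mem_nhdsWithin] with ρ hρ
    exact (V2_mul_tortoise_sq hm hρ).symm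
end

section
/- As a function of the tortoise coordinate, V₁ falls off like 2m·|s|⁻³ at both ends: lim_{ρ→∞} V₁(ρ)·|s(ρ)|³ = 2m and lim_{ρ→0⁺} V₁(ρ)·|s(ρ)|³ = 2m. -/
/-!
The inversion `ρ ↦ m²/ρ` exchanges the two ends; it fixes `V₁` and changes the sign of the
tortoise coordinate, so the limit at infinity follows from the limit at `0⁺`. For the latter,
`V₁ |s|³ = 2m |ρ s|³ / (ρ + m)⁶`, and `ρ s = ρ² - m² + 2m² (ρ/m) log (ρ/m)` extends continuously
to `ρ = 0` with value `-m²`, because `x log x` is continuous.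
-/

open Filter Topology

/-- The potential `V₁(ρ) = 2mρ³/(ρ+m)⁶`. -/
noncomputable def V1 (m ρ : ℝ) : ℝ := 2 * m * ρ ^ 3 / (ρ + m) ^ 6

lemma V1_inversion {m ρ : ℝ} (hm : 0 < m) (hρ : 0 < ρ) : V1 m (m ^ 2 / ρ) = V1 m ρ := by
  have h : m ^ 2 / ρ + m = m * (ρ + m) / ρ := by field_simp; ring
  have h' : ρ + m ≠ 0 := by positivity
  unfold V1
  rw [h]
  field_simp

lemma tortoise_inversion {m ρ : ℝ} (hm : 0 < m) (hρ : 0 < ρ) :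
    tortoise m (m ^ 2 / ρ) = -tortoise m ρ := by
  have h : m ^ 2 / ρ / m = (ρ / m)⁻¹ := by field_simp
  have h' : m ^ 2 / (m ^ 2 / ρ) = ρ := by field_simp
  unfold tortoise
  rw [h, h', Real.log_inv]
  ring

lemma tendsto_V1_mul_tortoise_zero {m : ℝ} (hm : 0 < m) :
    Tendsto (fun ρ : ℝ => V1 m ρ * |tortoise m ρ| ^ 3) (𝓝[>] 0) (𝓝 (2 * m)) := by
  have hc : ContinuousAt (fun ρ : ℝ => 2 * m / (ρ + m) ^ 6 *
      |ρ ^ 2 - m ^ 2 + 2 * m ^ 2 * (ρ / m * Real.log (ρ / m))| ^ 3) 0 := by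
    have hlog : Continuous fun ρ : ℝ => ρ / m * Real.log (ρ / m) :=
      Real.continuous_mul_log.comp (continuous_id.div_const m)
    have hden : ((0 : ℝ) + m) ^ 6 ≠ 0 := by positivity
    refine ContinuousAt.mul (ContinuousAt.div (by fun_prop) (by fun_prop) hden) ?_
    exact Continuous.continuousAt (by fun_prop)
  have ht := hc.tendsto.mono_left (nhdsWithin_le_nhds (s := Set.Ioi 0))
  have hval : 2 * m / (0 + m) ^ 6 *
      |(0 : ℝ) ^ 2 - m ^ 2 + 2 * m ^ 2 * (0 / m * Real.log (0 / m))| ^ 3 = 2 * m := by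
    have h : (0 : ℝ) ^ 2 - m ^ 2 + 2 * m ^ 2 * (0 / m * Real.log (0 / m)) = -m ^ 2 := by simp
    rw [h, abs_neg, abs_of_pos (by positivity)]
    field_simp
    ring
  rw [hval] at ht
  refine ht.congr' ?_
  filter_upwards [self_mem_nhdsWithin] with ρ hρ
  have hρ : 0 < ρ := hρ
  have hs : ρ ^ 2 - m ^ 2 + 2 * m ^ 2 * (ρ / m * Real.log (ρ / m)) = ρ * tortoise m ρ := by
    unfold tortoise
    field_simp
  rw [hs, abs_mul, abs_of_pos hρ]
  unfold V1
  ring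

/-- As a function of the tortoise coordinate, `V₁` falls off like `2m·|s|⁻³` at both
ends: `lim_{ρ→∞} V₁(ρ)·|s(ρ)|³ = 2m` and `lim_{ρ→0⁺} V₁(ρ)·|s(ρ)|³ = 2m`. -/
theorem V1_falloff (m : ℝ) (hm : 0 < m) :
    Tendsto (fun ρ : ℝ => V1 m ρ * |tortoise m ρ| ^ 3) atTop (𝓝 (2 * m)) ∧
    Tendsto (fun ρ : ℝ => V1 m ρ * |tortoise m ρ| ^ 3) (𝓝[>] 0) (𝓝 (2 * m)) := by
  refine ⟨?_, tendsto_V1_mul_tortoise_zero hm⟩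
  have hinv : Tendsto (fun ρ : ℝ => m ^ 2 / ρ) atTop (𝓝[>] 0) := by
    refine tendsto_nhdsWithin_iff.2 ⟨tendsto_const_nhds.div_atTop tendsto_id, ?_⟩
    filter_upwards [eventually_gt_atTop 0] with ρ hρ
    exact div_pos (pow_pos hm 2) hρ
  refine ((tendsto_V1_mul_tortoise_zero hm).comp hinv).congr' ?_
  filter_upwards [eventually_gt_atTop 0] with ρ hρ
  simp only [Function.comp_apply]
  rw [V1_inversion hm hρ, tortoise_inversion hm hρ, abs_neg]
end

section
/- Let ℓ ∈ ℕ and let P : (0,∞) → ℝ be twice differentiable. Then for every ρ > 0, −N(ρ)⁻² · d/dρ[ N(ρ)⁻² · d/dρ( N(ρ)·P(ρ) ) ] + (V₁(ρ) + ℓ(ℓ+1)·V₂(ρ)) · N(ρ)·P(ρ) = −N(ρ)⁻³ · ( P''(ρ) − ℓ(ℓ+1)·P(ρ)/ρ² ). That is, on the ℓ-th spherical-harmonic mode, the operator 𝒜 = −∂ₛ² + V₁ − V₂Δ applied to p = N·P equals −N⁻³ times the flat radial operator ∂²_ρ − ℓ(ℓ+1)/ρ² applied to P. -/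
/-!
Since `N⁻¹ = x / (x + m)` and `N⁻² N' = -m / (x + m)²`, the `s`-derivative of `N·P` is
`(x / (x + m)) P' - (m / (x + m)²) P` (`flux_eq`). Differentiating once more, the two `P'` terms
cancel because `(N⁻¹)' = -N⁻² N'`, leaving `N⁻¹ P'' + (2m / (x + m)³) P` (`hasDerivAt_flux`).
After multiplication by `-N⁻²` the zeroth-order term is exactly `-V₁ N P`, and
`V₂ N = N⁻³ / ρ²` accounts for the angular term.
-/

/-- The lapse-type factor `N(ρ) = 1 + m/ρ`. -/
noncomputable def Nlapse (m ρ : ℝ) : ℝ := 1 + m / ρ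

theorem flux_eq {m x : ℝ} (hm : 0 < m) (hx : 0 < x) {P : ℝ → ℝ} (hP : DifferentiableAt ℝ P x) :
    (Nlapse m x ^ 2)⁻¹ * deriv (fun y => Nlapse m y * P y) x =
      x / (x + m) * deriv P x - m / (x + m) ^ 2 * P x := by
  have hN : HasDerivAt (fun y => Nlapse m y) (-m / x ^ 2) x := by
    have h := ((hasDerivAt_const x m).div (hasDerivAt_id x) hx.ne').const_add 1
    refine h.congr_deriv ?_
    simp
  have hxm : x + m ≠ 0 := by positivity
  have hx0 := hx.ne'
  rw [(hN.fun_mul hP.hasDerivAt).deriv]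
  have e : Nlapse m x = (x + m) / x := by unfold Nlapse; field_simp
  rw [e]
  field_simp
  ring

theorem hasDerivAt_flux {m ρ : ℝ} (hm : 0 < m) (hρ : 0 < ρ) {P : ℝ → ℝ}
    (hP1 : DifferentiableAt ℝ P ρ) (hP2 : DifferentiableAt ℝ (deriv P) ρ) :
    HasDerivAt (fun x => x / (x + m) * deriv P x - m / (x + m) ^ 2 * P x)
      (ρ / (ρ + m) * deriv (deriv P) ρ + 2 * m / (ρ + m) ^ 3 * P ρ) ρ := by
  have hxm : ρ + m ≠ 0 := by positivity
  have hs : HasDerivAt (fun x : ℝ => x + m) 1 ρ := (hasDerivAt_id' ρ).add_const m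
  have h1 := ((hasDerivAt_id' ρ).fun_div hs hxm).fun_mul hP2.hasDerivAt
  have h2 := ((hasDerivAt_const ρ m).fun_div (hs.fun_pow 2) (pow_ne_zero 2 hxm)).fun_mul
    hP1.hasDerivAt
  refine (h1.fun_sub h2).congr_deriv ?_
  field_simp
  push_cast
  ring

/-- On the `ℓ`-th spherical-harmonic mode, the operator `𝒜 = -∂ₛ² + V₁ - V₂Δ`
applied to `p = N·P` equals `-N⁻³` times the flat radial operator
`∂²_ρ - ℓ(ℓ+1)/ρ²` applied to `P`: for every twice differentiable
`P : (0,∞) → ℝ` and every `ρ > 0`,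
`-N⁻²·d/dρ[N⁻²·d/dρ(N·P)] + (V₁ + ℓ(ℓ+1)V₂)·N·P = -N⁻³·(P'' - ℓ(ℓ+1)P/ρ²)`.
(Since `ds/dρ = N²`, the `s`-derivative equals `N⁻²` times the `ρ`-derivative.) -/
theorem mode_operator_identity (m : ℝ) (hm : 0 < m) (ℓ : ℕ) (P : ℝ → ℝ)
    (hP1 : ∀ ρ : ℝ, 0 < ρ → DifferentiableAt ℝ P ρ)
    (hP2 : ∀ ρ : ℝ, 0 < ρ → DifferentiableAt ℝ (deriv P) ρ) :
    ∀ ρ : ℝ, 0 < ρ →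
      -(Nlapse m ρ ^ 2)⁻¹ *
          deriv (fun x => (Nlapse m x ^ 2)⁻¹ * deriv (fun y => Nlapse m y * P y) x) ρ
        + (V1 m ρ + (ℓ : ℝ) * ((ℓ : ℝ) + 1) * V2 m ρ) * (Nlapse m ρ * P ρ)
      = -(Nlapse m ρ ^ 3)⁻¹ *
          (deriv (deriv P) ρ - (ℓ : ℝ) * ((ℓ : ℝ) + 1) * P ρ / ρ ^ 2) := by
  intro ρ hρ
  -- `flux_eq` holds only on `x > 0`, which is a neighbourhood of `ρ`.
  have hev : (fun x => (Nlapse m x ^ 2)⁻¹ * deriv (fun y => Nlapse m y * P y) x) =ᶠ[nhds ρ]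
      fun x => x / (x + m) * deriv P x - m / (x + m) ^ 2 * P x := by
    filter_upwards [lt_mem_nhds hρ] with x hx using flux_eq hm hx (hP1 x hx)
  rw [hev.deriv_eq, (hasDerivAt_flux hm hρ (hP1 ρ hρ) (hP2 ρ hρ)).deriv]
  have hxm : ρ + m ≠ 0 := by positivity
  have hρ0 := hρ.ne'
  have e : Nlapse m ρ = (ρ + m) / ρ := by unfold Nlapse; field_simp
  rw [e, V1, V2]
  field_simp
  ring
end

section
/- Let ℓ ∈ ℕ and let F : ℝ × ℝ → ℝ be a smooth solution of the ℓ-mode wave equation ∂²F/∂t² = ∂²F/∂x² − W_ℓ(x)·F for which there exists R > 0 such that F(t,x) = 0 whenever |x| ≥ R + |t|. Then there exists a smooth function F̃ : ℝ × ℝ → ℝ (a time integral of F) such that ∂F̃/∂t = F, F̃ satisfies the same equation ∂²F̃/∂t² = ∂²F̃/∂x² − W_ℓ(x)·F̃, and the energy ∫_ℝ [ (∂F̃/∂t)² + (∂F̃/∂x)² + W_ℓ(x)·F̃² ] dx is finite and independent of t. -/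
/-!
The time integral is `F̃(t, x) = u(x) + ∫₀ᵗ F(τ, x) dτ`. Integrating the wave equation for `F` in
time shows that `F̃` solves the same equation as soon as `u'' = W u + g` with `g = ∂F/∂t (0, ·)`,
a smooth function of compact support. So everything rests on solving this static equation by a `u`
with `∫ (u'² + W u²) < ∞` (`exists_mode_static`).

In the isotropic radius `ρ`, static waves on the extreme Reissner–Nordström exterior are harmonic
functions of flat space, so the homogeneous equation has the explicit solutions
`innerSol = (ρ + m) ρ^ℓ` and `outerSol = (ρ + m) ρ^(-ℓ-1)`, with Wronskian `-(2ℓ + 1)`. Variation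
of constants (`exists_static_source`) gives a `u` which is a multiple of `outerSol` near `+∞` and of
`innerSol` near `-∞`. Its static energy is finite since `u'² + W u² = (u u')'` outside the support
of `g`, where `u u'` is monotone, nonpositive near `+∞` and nonnegative near `-∞`
(`integrableOn_Ioi_energy`, `integrableOn_Iic_energy`).

Conservation: the energy density at time `t` differs from that at time `0` by the `x`-derivative of
the compactly supported function `∫₀ᵗ 2 F ∂F̃/∂x dτ`, whose integral over the line vanishes.
-/

open MeasureTheory

open Set Filter Topology

/-! ### The inverse tortoise coordinate -/

lemma hasDerivAt_tortoise {m ρ : ℝ} (hm : 0 < m) (hρ : 0 < ρ) :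
    HasDerivAt (tortoise m) ((ρ + m) ^ 2 / ρ ^ 2) ρ := by
  have h1 : HasDerivAt (fun r : ℝ => m ^ 2 / r) (-(m ^ 2) / ρ ^ 2) ρ := by
    simpa [div_eq_mul_inv, neg_mul, mul_neg] using (hasDerivAt_inv hρ.ne').const_mul (m ^ 2)
  have h2 : HasDerivAt (fun r : ℝ => Real.log (r / m)) (1 / m / (ρ / m)) ρ :=
    ((hasDerivAt_id ρ).div_const m).log (div_pos hρ hm).ne'
  have h := ((hasDerivAt_id ρ).sub h1).add (h2.const_mul (2 * m))
  refine (h.congr_deriv ?_).congr_of_eventuallyEq (Eventually.of_forall fun r => rfl)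
  field_simp
  ring

lemma strictMonoOn_tortoise {m : ℝ} (hm : 0 < m) : StrictMonoOn (tortoise m) (Ioi 0) := by
  refine strictMonoOn_of_deriv_pos (convex_Ioi 0)
    (fun ρ hρ => (hasDerivAt_tortoise hm hρ).continuousAt.continuousWithinAt) fun ρ hρ => ?_
  rw [interior_Ioi] at hρ
  rw [(hasDerivAt_tortoise hm hρ).deriv]
  have : 0 < ρ := hρ
  positivity

lemma continuous_tortoise_inverse {m : ℝ} (hm : 0 < m) {σ : ℝ → ℝ} (hσpos : ∀ x, 0 < σ x)
    (hσ : ∀ x, tortoise m (σ x) = x) : Continuous σ := by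
  have hmono : StrictMono σ := fun x y hxy => by
    rw [← (strictMonoOn_tortoise hm).lt_iff_lt (hσpos x) (hσpos y), hσ, hσ]
    exact hxy
  have hrange : range σ = Ioi 0 := by
    ext ρ
    refine ⟨fun ⟨x, hx⟩ => hx ▸ hσpos x, fun hρ => ⟨tortoise m ρ, ?_⟩⟩
    exact (strictMonoOn_tortoise hm).injOn (hσpos _) hρ (hσ _)
  refine continuous_iff_continuousAt.2 fun x => ?_
  refine hmono.strictMonoOn univ |>.continuousAt_of_image_mem_nhds univ_mem ?_
  rw [image_univ, hrange]
  exact Ioi_mem_nhds (hσpos x)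

lemma hasDerivAt_tortoise_inverse {m : ℝ} (hm : 0 < m) {σ : ℝ → ℝ} (hσpos : ∀ x, 0 < σ x)
    (hσ : ∀ x, tortoise m (σ x) = x) (x : ℝ) :
    HasDerivAt σ (σ x ^ 2 / (σ x + m) ^ 2) x := by
  have hx := hσpos x
  have h := HasDerivAt.of_local_left_inverse
    (continuous_tortoise_inverse hm hσpos hσ).continuousAt
    (hasDerivAt_tortoise hm (hσpos x)) (by positivity) (Eventually.of_forall hσ)
  rwa [inv_div] at h

/-- Bootstrapping the autonomous equation `σ' = σ² / (σ + m)²`. -/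
lemma contDiff_tortoise_inverse {m : ℝ} (hm : 0 < m) {σ : ℝ → ℝ} (hσpos : ∀ x, 0 < σ x)
    (hσ : ∀ x, tortoise m (σ x) = x) : ContDiff ℝ (⊤ : ℕ∞) σ := by
  have hd := hasDerivAt_tortoise_inverse hm hσpos hσ
  refine contDiff_infty.2 fun n => ?_
  induction n with
  | zero => exact contDiff_zero.2 (continuous_tortoise_inverse hm hσpos hσ)
  | succ n ih =>
    push_cast
    refine contDiff_succ_iff_deriv.2 ⟨fun x => (hd x).differentiableAt, by simp, ?_⟩
    rw [show deriv σ = fun x => σ x ^ 2 / (σ x + m) ^ 2 from funext fun x => (hd x).deriv]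
    refine (ih.pow 2).div ((ih.add contDiff_const).pow 2) fun x => ?_
    have := hσpos x
    positivity

/-! ### Static solutions of the mode equation -/

/-- The solution `(ρ + m) ρ ^ ℓ` of the static mode equation, regular at the horizon `ρ = 0`,
as a function of `ρ`. -/
noncomputable def innerSol (m : ℝ) (ℓ : ℕ) (ρ : ℝ) : ℝ := (ρ + m) * ρ ^ ℓ

/-- The solution `(ρ + m) ρ ^ (-ℓ - 1)` of the static mode equation, regular at spatial infinity,
as a function of `ρ`. -/
noncomputable def outerSol (m : ℝ) (ℓ : ℕ) (ρ : ℝ) : ℝ := (ρ + m) / ρ ^ (ℓ + 1)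

/-- The derivative of `innerSol` with respect to the tortoise coordinate (not `ρ`). -/
noncomputable def innerSol' (m : ℝ) (ℓ : ℕ) (ρ : ℝ) : ℝ :=
  ρ ^ (ℓ + 1) * ((ℓ + 1) * ρ + ℓ * m) / (ρ + m) ^ 2

/-- The derivative of `outerSol` with respect to the tortoise coordinate (not `ρ`). -/
noncomputable def outerSol' (m : ℝ) (ℓ : ℕ) (ρ : ℝ) : ℝ :=
  -(ℓ * ρ + (ℓ + 1) * m) / (ρ ^ ℓ * (ρ + m) ^ 2)

lemma hasDerivAt_innerSol {m : ℝ} (hm : 0 < m) (ℓ : ℕ) {σ : ℝ → ℝ} {x : ℝ}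
    (hpos : 0 < σ x) (hd : HasDerivAt σ (σ x ^ 2 / (σ x + m) ^ 2) x) :
    HasDerivAt (fun y => innerSol m ℓ (σ y)) (innerSol' m ℓ (σ x)) x := by
  have hne : σ x + m ≠ 0 := by positivity
  refine ((hd.add_const m).mul (hd.fun_pow ℓ)).congr_deriv ?_
  simp only [innerSol']
  rcases ℓ with _ | k
  · simp; field_simp
  · simp; field_simp; ring

lemma hasDerivAt_innerSol' {m : ℝ} (hm : 0 < m) (ℓ : ℕ) {σ : ℝ → ℝ} {x : ℝ}
    (hpos : 0 < σ x) (hd : HasDerivAt σ (σ x ^ 2 / (σ x + m) ^ 2) x) :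
    HasDerivAt (fun y => innerSol' m ℓ (σ y))
      ((V1 m (σ x) + ℓ * (ℓ + 1) * V2 m (σ x)) * innerSol m ℓ (σ x)) x := by
  have hne : σ x + m ≠ 0 := by positivity
  refine (((hd.fun_pow (ℓ + 1)).mul ((hd.const_mul (ℓ + 1 : ℝ)).add_const (ℓ * m))).div
    ((hd.add_const m).fun_pow 2) (by positivity)).congr_deriv ?_
  simp only [innerSol, V1, V2]
  push_cast
  simp
  field_simp
  ring

lemma hasDerivAt_outerSol {m : ℝ} (hm : 0 < m) (ℓ : ℕ) {σ : ℝ → ℝ} {x : ℝ}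
    (hpos : 0 < σ x) (hd : HasDerivAt σ (σ x ^ 2 / (σ x + m) ^ 2) x) :
    HasDerivAt (fun y => outerSol m ℓ (σ y)) (outerSol' m ℓ (σ x)) x := by
  have hne : σ x + m ≠ 0 := by positivity
  refine ((hd.add_const m).div (hd.fun_pow (ℓ + 1)) (by positivity)).congr_deriv ?_
  simp only [outerSol']
  push_cast
  simp
  field_simp
  ring

lemma hasDerivAt_outerSol' {m : ℝ} (hm : 0 < m) (ℓ : ℕ) {σ : ℝ → ℝ} {x : ℝ}
    (hpos : 0 < σ x) (hd : HasDerivAt σ (σ x ^ 2 / (σ x + m) ^ 2) x) :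
    HasDerivAt (fun y => outerSol' m ℓ (σ y))
      ((V1 m (σ x) + ℓ * (ℓ + 1) * V2 m (σ x)) * outerSol m ℓ (σ x)) x := by
  have hne : σ x + m ≠ 0 := by positivity
  refine ((((hd.const_mul (ℓ : ℝ)).add_const ((ℓ + 1 : ℝ) * m)).neg).div
    ((hd.fun_pow ℓ).mul ((hd.add_const m).fun_pow 2))
    (mul_pos (pow_pos hpos _) (pow_pos (by positivity) 2)).ne').congr_deriv ?_
  simp only [outerSol, V1, V2, Pi.mul_apply, Pi.neg_apply]
  rcases ℓ with _ | k
  · simp; field_simp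
  · simp; field_simp; ring

lemma wronskian_static {m : ℝ} (hm : 0 < m) (ℓ : ℕ) {ρ : ℝ} (hρ : 0 < ρ) :
    innerSol m ℓ ρ * outerSol' m ℓ ρ - innerSol' m ℓ ρ * outerSol m ℓ ρ = -(2 * ℓ + 1) := by
  have : ρ + m ≠ 0 := by positivity
  simp only [innerSol, outerSol, innerSol', outerSol']
  field_simp
  ring

/-! ### The static equation with a compactly supported source -/

/-- If `y'' = W y` with `W ≥ 0`, then `(y y')' = y' ² + W y ²` is nonnegative, so `y y'` is
monotone; being bounded above, it has a limit at `+∞`, hence its derivative is integrable there.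
No asymptotics of `y` are needed. -/
lemma integrableOn_Ioi_energy {W y y' : ℝ → ℝ} (hW : ∀ x, 0 ≤ W x)
    (hy : ∀ x, HasDerivAt y (y' x) x) (hy' : ∀ x, HasDerivAt y' (W x * y x) x)
    (hle : ∀ x, y x * y' x ≤ 0) (a : ℝ) :
    IntegrableOn (fun x => y' x ^ 2 + W x * y x ^ 2) (Ioi a) := by
  have hd : ∀ x, HasDerivAt (fun x => y x * y' x) (y' x ^ 2 + W x * y x ^ 2) x := fun x =>
    ((hy x).mul (hy' x)).congr_deriv (by ring)
  have hnn : ∀ x, 0 ≤ y' x ^ 2 + W x * y x ^ 2 := fun x =>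
    add_nonneg (sq_nonneg _) (mul_nonneg (hW x) (sq_nonneg _))
  have hmono : Monotone fun x => y x * y' x :=
    monotone_of_deriv_nonneg (fun x => (hd x).differentiableAt) fun x => by
      rw [(hd x).deriv]; exact hnn x
  exact integrableOn_Ioi_deriv_of_nonneg' (fun x _ => hd x) (fun x _ => hnn x)
    (tendsto_atTop_ciSup hmono ⟨0, by rintro _ ⟨x, rfl⟩; exact hle x⟩)

/-- The mirror image of `integrableOn_Ioi_energy` under `x ↦ -x`. -/
lemma integrableOn_Iic_energy {W y y' : ℝ → ℝ} (hW : ∀ x, 0 ≤ W x)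
    (hy : ∀ x, HasDerivAt y (y' x) x) (hy' : ∀ x, HasDerivAt y' (W x * y x) x)
    (hge : ∀ x, 0 ≤ y x * y' x) (a : ℝ) :
    IntegrableOn (fun x => y' x ^ 2 + W x * y x ^ 2) (Iic a) := by
  have h := integrableOn_Ioi_energy (W := fun x => W (-x)) (y := fun x => y (-x))
    (y' := fun x => -y' (-x)) (fun x => hW _)
    (fun x => by simpa [Function.comp_def] using (hy (-x)).comp x (hasDerivAt_neg x))
    (fun x => by simpa [Function.comp_def] using ((hy' (-x)).comp x (hasDerivAt_neg x)).fun_neg)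
    (fun x => by have := hge (-x); simp; linarith) (-a)
  rw [integrableOn_Iic_iff_integrableOn_Iio,
    ← (Measure.measurePreserving_neg (volume : Measure ℝ)).integrableOn_comp_preimage
      (Homeomorph.neg ℝ).measurableEmbedding]
  simpa [Function.comp_def] using h

lemma contDiff_primitive {f : ℝ → ℝ} (hf : ContDiff ℝ (⊤ : ℕ∞) f) (a : ℝ) :
    ContDiff ℝ (⊤ : ℕ∞) fun x => ∫ s in a..x, f s := by
  have hd : ∀ x, HasDerivAt (fun x => ∫ s in a..x, f s) (f x) x := fun x =>
    hf.continuous.integral_hasStrictDerivAt a x |>.hasDerivAt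
  refine contDiff_infty_iff_deriv.2 ⟨fun x => (hd x).differentiableAt, ?_⟩
  rwa [show deriv (fun x => ∫ s in a..x, f s) = f from funext fun x => (hd x).deriv]

/-- Variation of constants: for solutions `y`, `z` of the homogeneous equation with Wronskian `w`,
`u = w⁻¹ (z ∫_{-R}^x y g - y ∫_R^x z g)` solves `u'' = W u + g`. As `g` vanishes outside `[-R, R]`,
`u` is a multiple of `z` to the right of `R` and of `y` to the left of `-R`, so the sign
conditions on `y y'` and `z z'` make its static energy finite. -/
lemma exists_static_source {W y z y' z' g : ℝ → ℝ} {w R : ℝ} (hWc : Continuous W)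
    (hW : ∀ x, 0 ≤ W x)
    (hys : ContDiff ℝ (⊤ : ℕ∞) y) (hy : ∀ x, HasDerivAt y (y' x) x)
    (hy' : ∀ x, HasDerivAt y' (W x * y x) x) (hyy : ∀ x, 0 ≤ y x * y' x)
    (hzs : ContDiff ℝ (⊤ : ℕ∞) z) (hz : ∀ x, HasDerivAt z (z' x) x)
    (hz' : ∀ x, HasDerivAt z' (W x * z x) x) (hzz : ∀ x, z x * z' x ≤ 0)
    (hw : w ≠ 0) (hwr : ∀ x, y x * z' x - y' x * z x = w)
    (hgs : ContDiff ℝ (⊤ : ℕ∞) g) (hg : ∀ x, R ≤ |x| → g x = 0) (hR : 0 < R) :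
    ∃ u u' : ℝ → ℝ, ContDiff ℝ (⊤ : ℕ∞) u ∧ (∀ x, HasDerivAt u (u' x) x) ∧
      (∀ x, HasDerivAt u' (W x * u x + g x) x) ∧
      Integrable fun x => u' x ^ 2 + W x * u x ^ 2 := by
  have hAs : ContDiff ℝ (⊤ : ℕ∞) fun x => ∫ s in (-R)..x, y s * g s :=
    contDiff_primitive (hys.mul hgs) _
  have hBs : ContDiff ℝ (⊤ : ℕ∞) fun x => ∫ s in R..x, z s * g s :=
    contDiff_primitive (hzs.mul hgs) _
  have hA : ∀ x, HasDerivAt (fun x => ∫ s in (-R)..x, y s * g s) (y x * g x) x := fun x =>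
    (hys.mul hgs).continuous.integral_hasStrictDerivAt _ x |>.hasDerivAt
  have hB : ∀ x, HasDerivAt (fun x => ∫ s in R..x, z s * g s) (z x * g x) x := fun x =>
    (hzs.mul hgs).continuous.integral_hasStrictDerivAt _ x |>.hasDerivAt
  have hA0 : ∀ x ≤ -R, ∫ s in (-R)..x, y s * g s = 0 := fun x hx => by
    rw [intervalIntegral.integral_symm, intervalIntegral.integral_congr (g := fun _ => 0)]
    · simp
    · intro s hs
      rw [uIcc_of_le hx] at hs
      simp [hg s (le_abs.2 (Or.inr (by linarith [hs.2])))]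
  have hB0 : ∀ x, R ≤ x → ∫ s in R..x, z s * g s = 0 := fun x hx => by
    rw [intervalIntegral.integral_congr (g := fun _ => 0)]
    · simp
    · intro s hs
      rw [uIcc_of_le hx] at hs
      simp [hg s (le_abs.2 (Or.inl hs.1))]
  have hA1 : ∀ x, R ≤ x → ∫ s in (-R)..x, y s * g s = ∫ s in (-R)..R, y s * g s := fun x hx => by
    rw [← intervalIntegral.integral_add_adjacent_intervals (b := R)
      ((hys.mul hgs).continuous.intervalIntegrable _ _)
      ((hys.mul hgs).continuous.intervalIntegrable _ _), add_eq_left,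
      intervalIntegral.integral_congr (g := fun _ => 0)]
    · simp
    · intro s hs
      rw [uIcc_of_le hx] at hs
      simp [hg s (le_abs.2 (Or.inl hs.1))]
  have hB1 : ∀ x ≤ -R, ∫ s in R..x, z s * g s = ∫ s in R..(-R), z s * g s := fun x hx => by
    rw [← intervalIntegral.integral_add_adjacent_intervals (b := -R)
      ((hzs.mul hgs).continuous.intervalIntegrable _ _)
      ((hzs.mul hgs).continuous.intervalIntegrable _ _), add_eq_left,
      intervalIntegral.integral_symm, intervalIntegral.integral_congr (g := fun _ => 0)]
    · simp
    · intro s hs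
      rw [uIcc_of_le hx] at hs
      simp [hg s (le_abs.2 (Or.inr (by linarith [hs.2])))]
  set A : ℝ → ℝ := fun x => ∫ s in (-R)..x, y s * g s
  set B : ℝ → ℝ := fun x => ∫ s in R..x, z s * g s
  have hu' : ∀ x, HasDerivAt (fun x => w⁻¹ * (z' x * A x - y' x * B x))
      (W x * (w⁻¹ * (z x * A x - y x * B x)) + g x) x := fun x => by
    refine ((((hz' x).mul (hA x)).sub ((hy' x).mul (hB x))).const_mul w⁻¹).congr_deriv ?_
    field_simp
    linear_combination g x * hwr x
  refine ⟨fun x => w⁻¹ * (z x * A x - y x * B x), fun x => w⁻¹ * (z' x * A x - y' x * B x),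
    contDiff_const.mul ((hzs.mul hAs).sub (hys.mul hBs)), fun x => ?_, hu', ?_⟩
  · refine ((((hz x).mul (hA x)).sub ((hy x).mul (hB x))).const_mul w⁻¹).congr_deriv ?_
    ring
  · rw [← integrableOn_univ, ← Iic_union_Ioi (a := R),
      ← Iic_union_Icc_eq_Iic (show -R ≤ R by linarith)]
    refine ((IntegrableOn.union ?_ ?_)).union ?_
    · refine IntegrableOn.congr_fun (Integrable.const_mul
        (integrableOn_Iic_energy hW hy hy' hyy (-R)) ((w⁻¹ * B (-R)) ^ 2)) (fun x hx => ?_) measurableSet_Iic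
      simp only [show A x = 0 from hA0 x hx, show B x = B (-R) from hB1 x hx]
      ring
    · refine ContinuousOn.integrableOn_Icc (Continuous.continuousOn ?_)
      have h1 : Continuous fun x => w⁻¹ * (z' x * A x - y' x * B x) :=
        continuous_iff_continuousAt.2 fun x => (hu' x).continuousAt
      have h2 : Continuous fun x => w⁻¹ * (z x * A x - y x * B x) :=
        continuous_const.mul ((hzs.mul hAs).sub (hys.mul hBs)).continuous
      exact (h1.pow 2).add (hWc.mul (h2.pow 2))
    · refine IntegrableOn.congr_fun (Integrable.const_mul
        (integrableOn_Ioi_energy hW hz hz' hzz R) ((w⁻¹ * A R) ^ 2)) (fun x hx => ?_) measurableSet_Ioi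
      simp only [show A x = A R from hA1 x hx.le, show B x = 0 from hB0 x hx.le]
      ring

/-- `exists_static_source` for the mode potential, with the explicit solutions `innerSol` and
`outerSol`. -/
lemma exists_mode_static {m : ℝ} (hm : 0 < m) (ℓ : ℕ) {σ : ℝ → ℝ} (hσpos : ∀ x, 0 < σ x)
    (hσ : ∀ x, tortoise m (σ x) = x) {W : ℝ → ℝ}
    (hW : ∀ x, W x = V1 m (σ x) + (ℓ : ℝ) * ((ℓ : ℝ) + 1) * V2 m (σ x))
    {g : ℝ → ℝ} (hgs : ContDiff ℝ (⊤ : ℕ∞) g) {R : ℝ} (hR : 0 < R)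
    (hg : ∀ x, R ≤ |x| → g x = 0) :
    ∃ u u' : ℝ → ℝ, ContDiff ℝ (⊤ : ℕ∞) u ∧ (∀ x, HasDerivAt u (u' x) x) ∧
      (∀ x, HasDerivAt u' (W x * u x + g x) x) ∧
      Integrable fun x => u' x ^ 2 + W x * u x ^ 2 := by
  have hs := contDiff_tortoise_inverse hm hσpos hσ
  have hd := hasDerivAt_tortoise_inverse hm hσpos hσ
  have hc := hs.continuous
  have hne : ∀ x, σ x + m ≠ 0 := fun x => by have := hσpos x; positivity
  refine exists_static_source (w := -(2 * ℓ + 1)) (R := R)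
    (y := fun x => innerSol m ℓ (σ x)) (y' := fun x => innerSol' m ℓ (σ x))
    (z := fun x => outerSol m ℓ (σ x)) (z' := fun x => outerSol' m ℓ (σ x))
    ?_ ?_ ?_ (fun x => hasDerivAt_innerSol hm ℓ (hσpos x) (hd x)) (fun x => ?_) (fun x => ?_)
    ?_ (fun x => hasDerivAt_outerSol hm ℓ (hσpos x) (hd x)) (fun x => ?_) (fun x => ?_)
    (neg_ne_zero.2 (by positivity)) (fun x => wronskian_static hm ℓ (hσpos x)) hgs hg hR
  · rw [funext hW]
    unfold V1 V2
    fun_prop (disch := intro x; exact pow_ne_zero _ (hne x))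
  · intro x
    have := hσpos x
    rw [hW, V1, V2]
    positivity
  · exact (hs.add contDiff_const).mul (hs.pow ℓ)
  · rw [hW]; exact hasDerivAt_innerSol' hm ℓ (hσpos x) (hd x)
  · have := hσpos x
    simp only [innerSol, innerSol']
    positivity
  · exact (hs.add contDiff_const).div (hs.pow (ℓ + 1)) fun x => (pow_pos (hσpos x) _).ne'
  · rw [hW]; exact hasDerivAt_outerSol' hm ℓ (hσpos x) (hd x)
  · have := hσpos x
    simp only [outerSol, outerSol']
    rw [neg_div, mul_neg, neg_nonpos]
    positivity

/-! ### Partial derivatives and primitives in time -/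

/-- The spatial partial derivative of a function of `(t, x)`. -/
noncomputable def spaceDeriv (G : ℝ → ℝ → ℝ) (t x : ℝ) : ℝ := deriv (G t) x

/-- The primitive in time, normalised to vanish at `t = 0`. -/
noncomputable def timePrimitive (G : ℝ → ℝ → ℝ) (t x : ℝ) : ℝ := ∫ τ in (0 : ℝ)..t, G τ x

lemma hasDerivAt_space {G : ℝ → ℝ → ℝ} (hG : ContDiff ℝ (⊤ : ℕ∞) (Function.uncurry G))
    (t x : ℝ) : HasDerivAt (G t) (spaceDeriv G t x) x := by
  have : Differentiable ℝ (G t) :=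
    (hG.comp (contDiff_prodMk_right t)).differentiable (by simp)
  exact (this x).hasDerivAt

lemma contDiff_timeDeriv {G : ℝ → ℝ → ℝ} (hG : ContDiff ℝ (⊤ : ℕ∞) (Function.uncurry G)) :
    ContDiff ℝ (⊤ : ℕ∞) (Function.uncurry fun t x => deriv (fun τ => G τ x) t) := by
  have h : (Function.uncurry fun t x => deriv (fun τ => G τ x) t)
      = fun p => fderiv ℝ (Function.uncurry G) p (1, 0) := by
    ext ⟨t, x⟩
    have h1 := (hG.differentiable (by simp) (t, x)).hasFDerivAt
    exact (h1.comp_hasDerivAt t ((hasDerivAt_id t).prodMk (hasDerivAt_const t x))).deriv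
  rw [h]
  exact (contDiff_infty_iff_fderiv.1 hG).2.clm_apply contDiff_const

lemma contDiff_spaceDeriv {G : ℝ → ℝ → ℝ} (hG : ContDiff ℝ (⊤ : ℕ∞) (Function.uncurry G)) :
    ContDiff ℝ (⊤ : ℕ∞) (Function.uncurry (spaceDeriv G)) := by
  have h : Function.uncurry (spaceDeriv G)
      = fun p => fderiv ℝ (Function.uncurry G) p (0, 1) := by
    ext ⟨t, x⟩
    have h1 := (hG.differentiable (by simp) (t, x)).hasFDerivAt
    exact (h1.comp_hasDerivAt x ((hasDerivAt_const x t).prodMk (hasDerivAt_id x))).deriv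
  rw [h]
  exact (contDiff_infty_iff_fderiv.1 hG).2.clm_apply contDiff_const

lemma hasDerivAt_timePrimitive_time {G : ℝ → ℝ → ℝ} (hG : Continuous (Function.uncurry G))
    (t x : ℝ) : HasDerivAt (fun t => timePrimitive G t x) (G t x) t :=
  (hG.comp (Continuous.prodMk_left x)).integral_hasStrictDerivAt 0 t |>.hasDerivAt

/-- Differentiation under the integral sign; the dominating function is a bound for the continuous
function `∂G/∂x` on a compact rectangle. -/
lemma hasDerivAt_timePrimitive_space {G : ℝ → ℝ → ℝ}
    (hG : ContDiff ℝ (⊤ : ℕ∞) (Function.uncurry G)) (t x : ℝ) :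
    HasDerivAt (timePrimitive G t) (timePrimitive (spaceDeriv G) t x) x := by
  have hG' := (contDiff_spaceDeriv hG).continuous
  obtain ⟨C, hC⟩ := (isCompact_uIcc.prod (isCompact_closedBall x 1)).exists_bound_of_continuousOn
    (s := uIcc 0 t ×ˢ Metric.closedBall x 1) hG'.continuousOn
  refine (intervalIntegral.hasDerivAt_integral_of_dominated_loc_of_deriv_le
    (F := fun y τ => G τ y) (F' := fun y τ => spaceDeriv G τ y) (bound := fun _ => C)
    (Metric.closedBall_mem_nhds x one_pos) (Eventually.of_forall fun y => ?_) ?_ ?_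
    (Eventually.of_forall fun τ hτ y hy => ?_) intervalIntegrable_const
    (Eventually.of_forall fun τ _ y _ => hasDerivAt_space hG τ y)).2
  · exact (hG.continuous.comp (Continuous.prodMk_left y)).aestronglyMeasurable
  · exact (hG.continuous.comp (Continuous.prodMk_left x)).intervalIntegrable _ _
  · exact (hG'.comp (Continuous.prodMk_left x)).aestronglyMeasurable
  · exact hC (τ, y) ⟨uIoc_subset_uIcc hτ, hy⟩

lemma continuous_timePrimitive {G : ℝ → ℝ → ℝ} (hG : Continuous (Function.uncurry G)) :
    Continuous (Function.uncurry (timePrimitive G)) := by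
  have h : Continuous (Function.uncurry fun (p : ℝ × ℝ) (τ : ℝ) => G τ p.2) :=
    hG.comp (continuous_snd.prodMk (continuous_snd.comp continuous_fst))
  exact intervalIntegral.continuous_parametric_intervalIntegral_of_continuous
    (a₀ := 0) h continuous_fst

/-- Induction on the order of differentiability: the partial derivatives of the primitive are `G`
itself and the primitive of `∂G/∂x`. -/
lemma contDiff_timePrimitive {G : ℝ → ℝ → ℝ} (hG : ContDiff ℝ (⊤ : ℕ∞) (Function.uncurry G)) :
    ContDiff ℝ (⊤ : ℕ∞) (Function.uncurry (timePrimitive G)) := by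
  refine contDiff_infty.2 fun n => ?_
  induction n generalizing G with
  | zero => exact contDiff_zero.2 (continuous_timePrimitive hG.continuous)
  | succ n ih =>
    push_cast
    have hG' := contDiff_spaceDeriv hG
    have cs : ∀ {n : WithTop ℕ∞} {H : ℝ × ℝ → ℝ}, ContDiff ℝ n H →
        ContDiff ℝ n fun p => ContinuousLinearMap.toSpanSingleton ℝ (H p) := fun hH =>
      (ContinuousLinearMap.toSpanSingletonCLE (𝕜 := ℝ) (E := ℝ)).contDiff.comp hH
    refine contDiff_succ_iff_hasFDerivAt.2 ⟨fun p =>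
      (ContinuousLinearMap.toSpanSingleton ℝ (G p.1 p.2)).coprod
        (ContinuousLinearMap.toSpanSingleton ℝ (timePrimitive (spaceDeriv G) p.1 p.2)),
      ?_, fun p => ?_⟩
    · have h1 := cs (hG.of_le (show ((n : ℕ∞) : WithTop ℕ∞) ≤ (⊤ : ℕ∞) from mod_cast le_top))
      have h2 := cs (ih hG')
      exact (ContinuousLinearMap.coprodEquivL (𝕜 := ℝ) (E := ℝ) (F := ℝ) (G := ℝ) ℝ).contDiff.comp (h1.prodMk h2)
    · refine (hasStrictFDerivAt_uncurry_coprod (f := timePrimitive G)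
        (f₁ := fun t x => ContinuousLinearMap.toSpanSingleton ℝ (G t x))
        (f₂ := fun t x => ContinuousLinearMap.toSpanSingleton ℝ (timePrimitive (spaceDeriv G) t x))
        (Eventually.of_forall fun q =>
          (hasDerivAt_timePrimitive_time hG.continuous q.1 q.2).hasFDerivAt)
        (Eventually.of_forall fun q =>
          (hasDerivAt_timePrimitive_space hG q.1 q.2).hasFDerivAt) ?_ ?_).hasFDerivAt
      · exact (cs (contDiff_zero.2 hG.continuous)).continuous.continuousAt
      · exact (cs (contDiff_zero.2
          (continuous_timePrimitive hG'.continuous))).continuous.continuousAt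

/-! ### The time integral -/

/-- Existence of a time integral with finite conserved energy (mode version of
Lemma 3 of the paper): if `F` is a smooth solution of the `ℓ`-mode wave equation
`∂²F/∂t² = ∂²F/∂x² - W_ℓ(x)·F` vanishing for `|x| ≥ R + |t|`, then there is a smooth
`F̃` with `∂F̃/∂t = F`, satisfying the same equation, whose energy
`∫_ℝ [(∂F̃/∂t)² + (∂F̃/∂x)² + W_ℓ·F̃²] dx` is finite and independent of `t`. -/
theorem mode_time_integral_exists (m : ℝ) (hm : 0 < m) (ℓ : ℕ)
    (σ : ℝ → ℝ) (hσpos : ∀ x : ℝ, 0 < σ x) (hσ : ∀ x : ℝ, tortoise m (σ x) = x)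
    (W : ℝ → ℝ) (hW : ∀ x : ℝ, W x = V1 m (σ x) + (ℓ : ℝ) * ((ℓ : ℝ) + 1) * V2 m (σ x))
    (F : ℝ → ℝ → ℝ) (hF : ContDiff ℝ (⊤ : ℕ∞) (Function.uncurry F))
    (heq : ∀ t x : ℝ, deriv (deriv (fun τ => F τ x)) t = deriv (deriv (F t)) x - W x * F t x)
    (R : ℝ) (hR : 0 < R) (hsupp : ∀ t x : ℝ, R + |t| ≤ |x| → F t x = 0) :
    ∃ Ftil : ℝ → ℝ → ℝ,
      ContDiff ℝ (⊤ : ℕ∞) (Function.uncurry Ftil) ∧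
      (∀ t x : ℝ, deriv (fun τ => Ftil τ x) t = F t x) ∧
      (∀ t x : ℝ, deriv (deriv (fun τ => Ftil τ x)) t
        = deriv (deriv (Ftil t)) x - W x * Ftil t x) ∧
      ∃ E₀ : ℝ, ∀ t : ℝ,
        Integrable (fun x : ℝ =>
          (deriv (fun τ => Ftil τ x) t) ^ 2 + (deriv (Ftil t) x) ^ 2 + W x * Ftil t x ^ 2) ∧
        (∫ x : ℝ,
          ((deriv (fun τ => Ftil τ x) t) ^ 2 + (deriv (Ftil t) x) ^ 2
            + W x * Ftil t x ^ 2)) = E₀ := by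
  have hFt := contDiff_timeDeriv hF
  have hFtd : ∀ t x, HasDerivAt (fun τ => F τ x) (deriv (fun τ => F τ x) t) t := fun t x =>
    (((hF.comp (contDiff_prodMk_left x)).differentiable (by simp)) t).hasDerivAt
  have hFx := contDiff_spaceDeriv hF
  have hFxx := contDiff_spaceDeriv hFx
  have hg : ContDiff ℝ (⊤ : ℕ∞) fun x => deriv (fun τ => F τ x) 0 :=
    hFt.comp (contDiff_prodMk_right 0)
  -- Radius `R + 1` rather than `R`, so that `F` vanishes on a whole time interval around `0`.
  have hg0 : ∀ x, R + 1 ≤ |x| → deriv (fun τ => F τ x) 0 = 0 := fun x hx => by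
    have : (fun τ => F τ x) =ᶠ[𝓝 0] fun _ => 0 := by
      filter_upwards [Metric.ball_mem_nhds (0 : ℝ) one_pos] with τ hτ
      rw [Metric.mem_ball, Real.dist_eq, sub_zero] at hτ
      exact hsupp τ x (by linarith)
    rw [this.deriv_eq, deriv_const]
  obtain ⟨u, u', hus, hu, hu', hint⟩ :=
    exists_mode_static hm ℓ hσpos hσ hW hg (by linarith : 0 < R + 1) hg0
  have hus' : ContDiff ℝ (⊤ : ℕ∞) u' := by
    rw [← show deriv u = u' from funext fun x => (hu x).deriv]
    exact (contDiff_infty_iff_deriv.1 hus).2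
  -- The wave equation integrated from time `0` to `t`.
  have hwave : ∀ t x, timePrimitive (spaceDeriv (spaceDeriv F)) t x
      = deriv (fun τ => F τ x) t - deriv (fun τ => F τ x) 0 + W x * timePrimitive F t x := by
    intro t x
    have hcFt : Continuous (deriv (deriv fun τ => F τ x)) :=
      (contDiff_timeDeriv hFt).continuous.comp (Continuous.prodMk_left x)
    have hdd : ∀ τ, HasDerivAt (deriv fun τ => F τ x) (deriv (deriv fun τ => F τ x) τ) τ :=
      fun τ => ((hFt.comp (contDiff_prodMk_left x)).differentiable (by simp) τ).hasDerivAt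
    have hcF : Continuous fun τ => F τ x := hF.continuous.comp (Continuous.prodMk_left x)
    rw [← intervalIntegral.integral_eq_sub_of_hasDerivAt (fun τ _ => hdd τ)
      (hcFt.intervalIntegrable _ _), timePrimitive, timePrimitive,
      ← intervalIntegral.integral_const_mul, ← intervalIntegral.integral_add
        (hcFt.intervalIntegrable _ _) ((hcF.const_mul _).intervalIntegrable _ _)]
    refine intervalIntegral.integral_congr fun τ _ => ?_
    change deriv (deriv (F τ)) x = _
    linarith [heq τ x]
  -- The time integral is `u + P`, and `Q` is its spatial derivative.
  set P := timePrimitive F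
  set Q : ℝ → ℝ → ℝ := fun t x => u' x + timePrimitive (spaceDeriv F) t x
  have hQs : ContDiff ℝ (⊤ : ℕ∞) (Function.uncurry Q) :=
    (hus'.comp contDiff_snd).add (contDiff_timePrimitive hFx)
  have hPt : ∀ t x, HasDerivAt (fun τ => u x + P τ x) (F t x) t := fun t x =>
    (hasDerivAt_timePrimitive_time hF.continuous t x).const_add _
  have hPx : ∀ t x, HasDerivAt (fun y => u y + P t y) (Q t x) x := fun t x =>
    (hu x).add (hasDerivAt_timePrimitive_space hF t x)
  have hQt : ∀ t x, HasDerivAt (fun τ => Q τ x) (spaceDeriv F t x) t := fun t x =>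
    (hasDerivAt_timePrimitive_time hFx.continuous t x).const_add _
  have hQx : ∀ t x, HasDerivAt (Q t)
      (deriv (fun τ => F τ x) t + W x * (u x + P t x)) x := fun t x =>
    ((hu' x).add (hasDerivAt_timePrimitive_space hFx t x)).congr_deriv (by
      rw [hwave]; ring)
  have ht : ∀ t x, deriv (fun τ => u x + P τ x) t = F t x := fun t x => (hPt t x).deriv
  have hx : ∀ t x, deriv (fun y => u y + P t y) x = Q t x := fun t x => (hPx t x).deriv
  refine ⟨fun t x => u x + P t x, (hus.comp contDiff_snd).add (contDiff_timePrimitive hF), ht,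
    fun t x => ?_, ?_⟩
  · rw [show deriv (fun τ => u x + P τ x) = fun τ => F τ x from funext fun τ => ht τ x,
      show deriv (fun y => u y + P t y) = Q t from funext fun y => hx t y, (hQx t x).deriv]
    ring
  simp only [ht, hx]
  -- `H` is the energy flux: the time derivative of the energy density is `∂H/∂x`.
  set H : ℝ → ℝ → ℝ := fun t x => 2 * (F t x * Q t x)
  have hH : ContDiff ℝ (⊤ : ℕ∞) (Function.uncurry H) := contDiff_const.mul (hF.mul hQs)
  have hHx : ∀ t x, spaceDeriv H t x = 2 * (spaceDeriv F t x * Q t x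
      + F t x * (deriv (fun τ => F τ x) t + W x * (u x + P t x))) := fun t x =>
    (((hasDerivAt_space hF t x).mul (hQx t x)).const_mul 2).deriv
  have hflux : ∀ t x, F t x ^ 2 + Q t x ^ 2 + W x * (u x + P t x) ^ 2
      = F 0 x ^ 2 + Q 0 x ^ 2 + W x * (u x + P 0 x) ^ 2
        + timePrimitive (spaceDeriv H) t x := fun t x => by
    have hd : ∀ τ, HasDerivAt (fun t => F t x ^ 2 + Q t x ^ 2 + W x * (u x + P t x) ^ 2)
        (spaceDeriv H τ x) τ := fun τ => by
      refine ((((hFtd τ x).fun_pow 2).add ((hQt τ x).fun_pow 2)).add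
        (((hPt τ x).fun_pow 2).const_mul (W x))).congr_deriv ?_
      rw [hHx]
      push_cast
      ring
    have := intervalIntegral.integral_eq_sub_of_hasDerivAt (a := 0) (b := t) (fun τ _ => hd τ)
      (((contDiff_spaceDeriv hH).continuous.comp
        (Continuous.prodMk_left x)).intervalIntegrable _ _)
    rw [timePrimitive, this]
    ring
  have hcpt : ∀ t, HasCompactSupport (timePrimitive H t) := fun t => by
    refine HasCompactSupport.intro (isCompact_Icc (a := -(R + |t|)) (b := R + |t|)) fun x hx => ?_
    have hx' : R + |t| < |x| := by
      by_contra h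
      exact hx (abs_le.1 (not_lt.1 h))
    rw [timePrimitive, intervalIntegral.integral_congr (g := fun _ => 0)]
    · simp
    · intro τ hτ
      have : |τ| ≤ |t| := by simpa using abs_sub_left_of_mem_uIcc hτ
      simp [H, hsupp τ x (by linarith)]
  have hHd := fun t x => hasDerivAt_timePrimitive_space hH t x
  have hHint : ∀ t, Integrable fun x => timePrimitive (spaceDeriv H) t x := fun t => by
    have h := (hcpt t).deriv
    rw [show deriv (timePrimitive H t) = fun x => timePrimitive (spaceDeriv H) t x from
      funext fun x => (hHd t x).deriv] at h
    exact ((contDiff_timePrimitive (contDiff_spaceDeriv hH)).continuous.comp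
      (Continuous.prodMk_right t)).integrable_of_hasCompactSupport h
  have hH0 : ∀ t, ∫ x, timePrimitive (spaceDeriv H) t x = 0 := fun t =>
    integral_eq_zero_of_hasDerivAt_of_integrable (hHd t) (hHint t)
      (((contDiff_timePrimitive hH).continuous.comp
        (Continuous.prodMk_right t)).integrable_of_hasCompactSupport (hcpt t))
  have hF0 : Integrable fun x => F 0 x ^ 2 := by
    have hc : Continuous fun x => F 0 x ^ 2 :=
      (hF.continuous.comp (Continuous.prodMk_right 0)).pow 2
    refine hc.integrable_of_hasCompactSupport
      (HasCompactSupport.intro (isCompact_Icc (a := -R) (b := R)) fun x hx => ?_)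
    have hx' : R < |x| := by
      by_contra h
      exact hx (abs_le.1 (not_lt.1 h))
    simp [hsupp 0 x (by simpa using hx'.le)]
  have hE0 : Integrable fun x => F 0 x ^ 2 + Q 0 x ^ 2 + W x * (u x + P 0 x) ^ 2 := by
    refine (hF0.add hint).congr (Eventually.of_forall fun x => ?_)
    simp [Q, P, timePrimitive, add_assoc]
  refine ⟨∫ x, (F 0 x ^ 2 + Q 0 x ^ 2 + W x * (u x + P 0 x) ^ 2), fun t => ?_⟩
  rw [funext fun x => hflux t x]
  refine ⟨hE0.add (hHint t), ?_⟩
  rw [integral_add hE0 (hHint t), hH0, add_zero]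
end

section
/- The Aretakis quantity H₀ is conserved along the horizon generators: for every v₁, v₂ ∈ ℝ, ∂_rΦ(v₁, m) + Φ(v₁, m)/m = ∂_rΦ(v₂, m) + Φ(v₂, m)/m. Equivalently, the function v ↦ ∂_rΦ(v,m) + Φ(v,m)/m has vanishing derivative in v. -/
/-!
At `r = m` every term of the wave equation carrying a factor `r - m` vanishes, and what is left
is `2 ∂_v (∂_r Φ + Φ / m) = 0`. Joint smoothness of `Φ` makes `v ↦ ∂_r Φ(v, m)` and
`v ↦ Φ(v, m)` differentiable, so the derivative of the Aretakis quantity is the sum of theirs,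
and a differentiable function on `ℝ` with zero derivative is constant.
-/

/-- The `r`-derivative of a jointly smooth function, at fixed `r`, is differentiable in `v`:
it is the Fréchet derivative applied to the constant vector `(0, 1)`. -/
lemma differentiable_deriv_slice (Φ : ℝ → ℝ → ℝ)
    (hΦ : ContDiff ℝ (⊤ : ℕ∞) (Function.uncurry Φ)) (r : ℝ) :
    Differentiable ℝ (fun w => deriv (Φ w) r) := by
  have hd : Differentiable ℝ (Function.uncurry Φ) := hΦ.differentiable (by simp)
  have hslice : (fun w => deriv (Φ w) r)
      = fun w => fderiv ℝ (Function.uncurry Φ) (w, r) (0, 1) := by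
    funext w
    have hline : HasDerivAt (fun s : ℝ => (w, s)) ((0 : ℝ), (1 : ℝ)) r :=
      (hasDerivAt_const r w).prodMk (hasDerivAt_id r)
    exact ((hd (w, r)).hasFDerivAt.comp_hasDerivAt r hline).deriv
  rw [hslice]
  have hf : Differentiable ℝ (fderiv ℝ (Function.uncurry Φ)) :=
    (hΦ.fderiv_right (m := 1) (WithTop.coe_le_coe.2 le_top)).differentiable (by simp)
  exact (hf.comp (differentiable_id.prodMk (differentiable_const r))).clm_apply
    (differentiable_const _)

/-- Conservation of the Aretakis quantity `H₀(v) = ∂_rΦ(v,m) + Φ(v,m)/m` along the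
horizon generators of the extreme Reissner–Nordström black hole: for a smooth
spherically symmetric solution of the wave equation in ingoing Eddington–Finkelstein
coordinates, `H₀(v₁) = H₀(v₂)` for all `v₁, v₂`, and `v ↦ H₀(v)` has vanishing
derivative. -/
theorem aretakis_quantity_conserved (m : ℝ) (hm : 0 < m)
    (Φ : ℝ → ℝ → ℝ) (hΦ : ContDiff ℝ (⊤ : ℕ∞) (Function.uncurry Φ))
    (hwave : ∀ v r : ℝ, 0 < r →
      ((r - m) / r) ^ 2 * deriv (deriv (Φ v)) r
        + 2 * ((r - m) / r ^ 2) * deriv (Φ v) r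
        + 2 * deriv (fun w => deriv (Φ w) r) v
        + (2 / r) * deriv (fun w => Φ w r) v = 0) :
    (∀ v₁ v₂ : ℝ,
      deriv (Φ v₁) m + Φ v₁ m / m = deriv (Φ v₂) m + Φ v₂ m / m) ∧
    (∀ v : ℝ, deriv (fun w => deriv (Φ w) m + Φ w m / m) v = 0) := by
  have hd : Differentiable ℝ (Function.uncurry Φ) := hΦ.differentiable (by simp)
  have h1 := differentiable_deriv_slice Φ hΦ m
  have h2 : Differentiable ℝ (fun w => Φ w m) :=
    hd.comp (differentiable_id.prodMk (differentiable_const m))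
  have hderiv : ∀ v : ℝ, deriv (fun w => deriv (Φ w) m + Φ w m / m) v = 0 := by
    intro v
    refine ((h1 v).hasDerivAt.add ((h2 v).hasDerivAt.div_const m)).deriv.trans ?_
    have hw := hwave v m hm
    simp only [sub_self, zero_div, ne_eq, OfNat.ofNat_ne_zero, not_false_eq_true, zero_pow,
      zero_mul, mul_zero, zero_add] at hw
    linear_combination hw / 2
  exact ⟨is_const_of_deriv_eq_zero (h1.add (h2.div_const m)) hderiv, hderiv⟩
end

section
/- The second transverse derivative of Φ at the horizon satisfies the evolution equation ∂_v(∂²_rΦ)(v, m) = (2/m²)·∂_vΦ(v, m) − (1/m²)·∂_rΦ(v, m) for every v ∈ ℝ. -/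
/-!
Multiplying the wave equation by `r²` and differentiating in `r` at the horizon `r = m` leaves
`2 ∂_rΦ + 4m ∂_v∂_rΦ + 2m² ∂_r∂_v∂_rΦ + 2 ∂_vΦ + 2m ∂_r∂_vΦ = 0`, because the `∂²_rΦ` term
vanishes there to second order. Partial derivatives of smooth functions commute
(`deriv_partial_comm`), and the wave equation at `r = m` itself gives
`m ∂_v∂_rΦ + ∂_vΦ = 0`; eliminating `∂_v∂_rΦ` yields the claim.
-/

lemma hasDerivAt_snd_of_contDiff {F : ℝ → ℝ → ℝ}
    (hF : ContDiff ℝ (⊤ : ℕ∞) (Function.uncurry F)) (v r : ℝ) :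
    HasDerivAt (F v) (fderiv ℝ (Function.uncurry F) (v, r) (0, 1)) r := by
  have h := (hF.differentiable (by simp) (v, r)).hasFDerivAt
  exact h.comp_hasDerivAt r ((hasDerivAt_const r v).prodMk (hasDerivAt_id r))

lemma hasDerivAt_fst_of_contDiff {F : ℝ → ℝ → ℝ}
    (hF : ContDiff ℝ (⊤ : ℕ∞) (Function.uncurry F)) (v r : ℝ) :
    HasDerivAt (fun w => F w r) (fderiv ℝ (Function.uncurry F) (v, r) (1, 0)) v := by
  have h := (hF.differentiable (by simp) (v, r)).hasFDerivAt
  exact h.comp_hasDerivAt v ((hasDerivAt_id v).prodMk (hasDerivAt_const v r))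

lemma contDiff_deriv_snd {F : ℝ → ℝ → ℝ}
    (hF : ContDiff ℝ (⊤ : ℕ∞) (Function.uncurry F)) :
    ContDiff ℝ (⊤ : ℕ∞) (Function.uncurry fun v r => deriv (F v) r) := by
  have h : (Function.uncurry fun v r => deriv (F v) r)
      = fun p => fderiv ℝ (Function.uncurry F) p (0, 1) := by
    ext ⟨v, r⟩
    exact (hasDerivAt_snd_of_contDiff hF v r).deriv
  rw [h]
  exact (hF.fderiv_right (by simp)).clm_apply contDiff_const

lemma contDiff_deriv_fst {F : ℝ → ℝ → ℝ}
    (hF : ContDiff ℝ (⊤ : ℕ∞) (Function.uncurry F)) :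
    ContDiff ℝ (⊤ : ℕ∞) (Function.uncurry fun v r => deriv (fun w => F w r) v) := by
  have h : (Function.uncurry fun v r => deriv (fun w => F w r) v)
      = fun p => fderiv ℝ (Function.uncurry F) p (1, 0) := by
    ext ⟨v, r⟩
    exact (hasDerivAt_fst_of_contDiff hF v r).deriv
  rw [h]
  exact (hF.fderiv_right (by simp)).clm_apply contDiff_const

/-- Equality of mixed partial derivatives, phrased with one-variable `deriv`s. -/
lemma deriv_partial_comm {F : ℝ → ℝ → ℝ}
    (hF : ContDiff ℝ (⊤ : ℕ∞) (Function.uncurry F)) (v r : ℝ) :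
    deriv (fun s => deriv (fun w => F w s) v) r = deriv (fun w => deriv (F w) r) v := by
  have h1 : (fun s => deriv (fun w => F w s) v)
      = fun s => fderiv ℝ (Function.uncurry F) (v, s) (1, 0) := by
    ext s
    exact (hasDerivAt_fst_of_contDiff hF v s).deriv
  have h2 : (fun w => deriv (F w) r)
      = fun w => fderiv ℝ (Function.uncurry F) (w, r) (0, 1) := by
    ext w
    exact (hasDerivAt_snd_of_contDiff hF w r).deriv
  have hd : ContDiff ℝ (⊤ : ℕ∞) (fderiv ℝ (Function.uncurry F)) := hF.fderiv_right (by simp)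
  have h := (hd.differentiable (by simp) (v, r)).hasFDerivAt
  have e1 : HasDerivAt (fun s => fderiv ℝ (Function.uncurry F) (v, s))
      (fderiv ℝ (fderiv ℝ (Function.uncurry F)) (v, r) (0, 1)) r :=
    h.comp_hasDerivAt r ((hasDerivAt_const r v).prodMk (hasDerivAt_id r))
  have e2 : HasDerivAt (fun w => fderiv ℝ (Function.uncurry F) (w, r))
      (fderiv ℝ (fderiv ℝ (Function.uncurry F)) (v, r) (1, 0)) v :=
    h.comp_hasDerivAt v ((hasDerivAt_id v).prodMk (hasDerivAt_const v r))
  have hs : IsSymmSndFDerivAt ℝ (Function.uncurry F) (v, r) :=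
    hF.contDiffAt.isSymmSndFDerivAt (by
      rw [minSmoothness_of_isRCLikeNormedField]
      exact WithTop.coe_le_coe.2 le_top)
  have e1' := (e1.clm_apply (hasDerivAt_const r ((1, 0) : ℝ × ℝ))).deriv
  have e2' := (e2.clm_apply (hasDerivAt_const v ((0, 1) : ℝ × ℝ))).deriv
  rw [map_zero, add_zero] at e1' e2'
  rw [h1, h2, e1', e2']
  exact hs (0, 1) (1, 0)

/-- Evolution equation for the second transverse derivative at the horizon of the
extreme Reissner–Nordström black hole: for a smooth spherically symmetric solution
of the wave equation in ingoing Eddington–Finkelstein coordinates,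
`∂_v(∂²_rΦ)(v,m) = (2/m²)·∂_vΦ(v,m) - (1/m²)·∂_rΦ(v,m)` for every `v`. -/
theorem second_transverse_derivative_evolution (m : ℝ) (hm : 0 < m)
    (Φ : ℝ → ℝ → ℝ) (hΦ : ContDiff ℝ (⊤ : ℕ∞) (Function.uncurry Φ))
    (hwave : ∀ v r : ℝ, 0 < r →
      ((r - m) / r) ^ 2 * deriv (deriv (Φ v)) r
        + 2 * ((r - m) / r ^ 2) * deriv (Φ v) r
        + 2 * deriv (fun w => deriv (Φ w) r) v
        + (2 / r) * deriv (fun w => Φ w r) v = 0) :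
    ∀ v : ℝ, deriv (fun w => deriv (deriv (Φ w)) m) v
      = (2 / m ^ 2) * deriv (fun w => Φ w m) v - (1 / m ^ 2) * deriv (Φ v) m := by
  intro v
  have sB := contDiff_deriv_snd hΦ
  have sA := contDiff_deriv_snd sB
  have sC := contDiff_deriv_fst sB
  have sD := contDiff_deriv_fst hΦ
  have dA := (hasDerivAt_snd_of_contDiff sA v m).differentiableAt.hasDerivAt
  have dB := (hasDerivAt_snd_of_contDiff sB v m).differentiableAt.hasDerivAt
  have dC := (hasDerivAt_snd_of_contDiff sC v m).differentiableAt.hasDerivAt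
  have dD := (hasDerivAt_snd_of_contDiff sD v m).differentiableAt.hasDerivAt
  rw [deriv_partial_comm sB v m] at dC
  rw [deriv_partial_comm hΦ v m] at dD
  have hid := (hasDerivAt_id m).sub_const m
  have hG := ((((hid.pow 2).mul dA).add ((hid.const_mul 2).mul dB)).add
    ((((hasDerivAt_id m).pow 2).const_mul 2).mul dC)).add
    (((hasDerivAt_id m).const_mul 2).mul dD)
  -- `r²` times the wave equation, valid near the horizon since `m > 0`
  have hzero := hG.congr_of_eventuallyEq (f₁ := fun _ => (0 : ℝ)) (by
    filter_upwards [lt_mem_nhds hm] with r hr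
    have h := hwave v r hr
    have hr' : r ≠ 0 := hr.ne'
    simp only [Pi.add_apply, Pi.mul_apply, Pi.pow_apply, id]
    field_simp at h
    linear_combination -h)
  have key := hzero.unique (hasDerivAt_const m (0 : ℝ))
  have hw := hwave v m hm
  have hm' : m ≠ 0 := hm.ne'
  simp at key hw
  field_simp at hw ⊢
  linear_combination key / 2 - 3 / 2 * hw
end

section
/- Suppose the Aretakis quantity vanishes, i.e. ∂_rΦ(v,m) + Φ(v,m)/m = 0 for all v (as holds for solutions evolving from data of compact support on a Cauchy slice of the exterior), and suppose there exist constants C > 0 and v₁ > 0 such that |Φ(v,m)| ≤ C·v^{−3/5} for all v ≥ v₁. Then there exists a constant C' > 0 such that |∂²_rΦ(v,m)| ≤ C'·v^{2/5} for all v ≥ v₁. In particular the second transverse derivative at the horizon grows at most like v^{2/5}, strictly slower than the linear growth occurring when the Aretakis quantity is nonzero. -/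
/-!
Differentiating the wave equation in `r` and evaluating at `r = m` removes the `∂_r²Φ` and `∂_r³Φ`
terms, because `((r - m) / r)²` has a double zero and `(r - m) / r²` a simple zero there, and
leaves the transport equation
`∂_v (∂_r²Φ + ∂_rΦ / m - Φ / m²) = - ∂_rΦ / m²` along the horizon. When the Aretakis quantity
vanishes, `∂_rΦ = - Φ / m` on the horizon, so this reads `∂_v (∂_r²Φ - 2 Φ / m²) = Φ / m³`
(`hasDerivAt_horizon`). The right side is `O(v^{-3/5})`, hence
its integral is `O(v^{2/5})` (`growth_of_deriv_decay`), while the term `2 Φ / m²` is bounded by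
a multiple of `v^{2/5}`.
-/

/-- The partial derivative in the advanced time `v`, the first variable. -/
noncomputable def partialV (F : ℝ × ℝ → ℝ) (p : ℝ × ℝ) : ℝ := fderiv ℝ F p (1, 0)

/-- The partial derivative in the radius `r`, the second variable. -/
noncomputable def partialR (F : ℝ × ℝ → ℝ) (p : ℝ × ℝ) : ℝ := fderiv ℝ F p (0, 1)

lemma contDiff_partialV {F : ℝ × ℝ → ℝ} (hF : ContDiff ℝ (⊤ : ℕ∞) F) :
    ContDiff ℝ (⊤ : ℕ∞) (partialV F) :=
  (hF.fderiv_right (m := (⊤ : ℕ∞)) (by simp)).clm_apply contDiff_const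

lemma contDiff_partialR {F : ℝ × ℝ → ℝ} (hF : ContDiff ℝ (⊤ : ℕ∞) F) :
    ContDiff ℝ (⊤ : ℕ∞) (partialR F) :=
  (hF.fderiv_right (m := (⊤ : ℕ∞)) (by simp)).clm_apply contDiff_const

lemma hasDerivAt_partialV {F : ℝ × ℝ → ℝ} (hF : ContDiff ℝ (⊤ : ℕ∞) F) (v r : ℝ) :
    HasDerivAt (fun w => F (w, r)) (partialV F (v, r)) v :=
  ((hF.differentiable (by simp)) (v, r)).hasFDerivAt.comp_hasDerivAt v
    ((hasDerivAt_id v).prodMk (hasDerivAt_const v r))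

lemma hasDerivAt_partialR {F : ℝ × ℝ → ℝ} (hF : ContDiff ℝ (⊤ : ℕ∞) F) (v r : ℝ) :
    HasDerivAt (fun s => F (v, s)) (partialR F (v, r)) r :=
  ((hF.differentiable (by simp)) (v, r)).hasFDerivAt.comp_hasDerivAt r
    ((hasDerivAt_const r v).prodMk (hasDerivAt_id r))

lemma partialR_partialV {F : ℝ × ℝ → ℝ} (hF : ContDiff ℝ (⊤ : ℕ∞) F) (p : ℝ × ℝ) :
    partialR (partialV F) p = partialV (partialR F) p := by
  have hd : DifferentiableAt ℝ (fderiv ℝ F) p :=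
    (hF.fderiv_right (m := (⊤ : ℕ∞)) (by simp)).differentiable (by simp) p
  have key : ∀ u w : ℝ × ℝ, fderiv ℝ (fun q => fderiv ℝ F q u) p w
      = fderiv ℝ (fderiv ℝ F) p w u := by
    intro u w
    rw [fderiv_clm_apply hd (differentiableAt_const u)]
    simp
  have hs : IsSymmSndFDerivAt ℝ F p := hF.contDiffAt.isSymmSndFDerivAt (by
    simp only [minSmoothness_of_isRCLikeNormedField]
    exact WithTop.coe_le_coe.2 (le_top : (2 : ℕ∞) ≤ ⊤))
  exact (key (1, 0) (0, 1)).trans ((hs.eq _ _).trans (key (0, 1) (1, 0)).symm)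

/-- The transport equation along the horizon: the `r`-derivative of the wave equation at `r = m`,
with `∂_rΦ` eliminated through the vanishing of the Aretakis quantity. -/
lemma hasDerivAt_horizon {m : ℝ} (hm : 0 < m) {F : ℝ × ℝ → ℝ} (hF : ContDiff ℝ (⊤ : ℕ∞) F)
    (hwave : ∀ v r : ℝ, 0 < r →
      ((r - m) / r) ^ 2 * partialR (partialR F) (v, r)
        + 2 * ((r - m) / r ^ 2) * partialR F (v, r)
        + 2 * partialV (partialR F) (v, r)
        + (2 / r) * partialV F (v, r) = 0)
    (hH₀ : ∀ v : ℝ, partialR F (v, m) + F (v, m) / m = 0) (v : ℝ) :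
    HasDerivAt (fun w => partialR (partialR F) (w, m) - 2 * F (w, m) / m ^ 2)
      (F (v, m) / m ^ 3) v := by
  have hR := contDiff_partialR hF
  have hRR := contDiff_partialR hR
  have hm0 : m ≠ 0 := hm.ne'
  have hx : HasDerivAt (fun r : ℝ => r - m) 1 m := (hasDerivAt_id m).sub_const m
  have h1 := ((hx.div (hasDerivAt_id m) hm0).pow 2).mul (hasDerivAt_partialR hRR v m)
  have h2 := ((hx.div ((hasDerivAt_id m).pow 2) (pow_ne_zero 2 hm0)).const_mul 2).mul
    (hasDerivAt_partialR hR v m)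
  have h3 := (hasDerivAt_partialR (contDiff_partialV hR) v m).const_mul 2
  have h4 := ((hasDerivAt_const m (2 : ℝ)).div (hasDerivAt_id m) hm0).mul
    (hasDerivAt_partialR (contDiff_partialV hF) v m)
  have hsum := ((h1.add h2).add h3).add h4
  have hzero := hsum.congr_of_eventuallyEq (f₁ := fun _ => (0 : ℝ)) (by
    filter_upwards [lt_mem_nhds hm] with r hr
    simpa using (hwave v r hr).symm)
  have hdiff := hzero.unique (hasDerivAt_const m (0 : ℝ))
  rw [partialR_partialV hF, partialR_partialV hR] at hdiff
  -- Differentiating `H₀ = 0` along the horizon eliminates `∂_v∂_rΦ`.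
  have hH := ((hasDerivAt_partialV hR v m).add ((hasDerivAt_partialV hF v m).div_const m))
  have hH' := (hH.congr_of_eventuallyEq (f₁ := fun _ => (0 : ℝ))
    (Filter.Eventually.of_forall fun w => (hH₀ w).symm)).unique (hasDerivAt_const v (0 : ℝ))
  have hmain := (hasDerivAt_partialV hRR v m).sub
    (((hasDerivAt_partialV hF v m).const_mul 2).div_const (m ^ 2))
  refine hmain.congr_deriv ?_
  have e1 : partialV (partialR F) (v, m) = -(partialV F (v, m) / m) := by linarith
  have e2 : partialR F (v, m) = -(F (v, m) / m) := by linarith [hH₀ v]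
  simp [e1, e2] at hdiff
  field_simp at hdiff ⊢
  linarith

/-- A function whose derivative is `O(v^{-3/5})` is `O(v^{2/5})`, the growth of the primitive
`(5/2) v^{2/5}`. -/
lemma growth_of_deriv_decay {A A' : ℝ → ℝ} {K v₁ : ℝ} (hv₁ : 0 < v₁)
    (hA : ∀ v, HasDerivAt A (A' v) v)
    (hA' : ∀ v, v₁ ≤ v → |A' v| ≤ K * v ^ (-(3 : ℝ) / 5)) {v : ℝ} (hv : v₁ ≤ v) :
    |A v| ≤ |A v₁| + K * (5 / 2) * v ^ ((2 : ℝ) / 5) := by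
  have hK : 0 ≤ K := by
    have h := (abs_nonneg _).trans (hA' v₁ le_rfl)
    exact nonneg_of_mul_nonneg_left h (Real.rpow_pos_of_pos hv₁ _)
  have hB : ∀ x, v₁ ≤ x → HasDerivAt
      (fun x : ℝ => |A v₁| + K * (5 / 2) * (x ^ ((2 : ℝ) / 5)))
      (K * x ^ (-(3 : ℝ) / 5)) x := by
    intro x hx
    have h := ((Real.hasDerivAt_rpow_const (x := x) (p := (2 : ℝ) / 5)
      (Or.inl (hv₁.trans_le hx).ne')).const_mul (K * (5 / 2))).const_add |A v₁|
    refine h.congr_deriv ?_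
    norm_num
    ring
  have h := image_norm_le_of_norm_deriv_right_le_deriv_boundary' (a := v₁) (b := v)
    (f := A) (f' := A')
    (fun x _ => (hA x).continuousAt.continuousWithinAt)
    (fun x _ => (hA x).hasDerivWithinAt) (by
      have : 0 ≤ K * (5 / 2) * v₁ ^ ((2 : ℝ) / 5) := by positivity
      simpa [Real.norm_eq_abs] using this)
    (fun x hx => (hB x hx.1).continuousAt.continuousWithinAt)
    (fun x hx => (hB x hx.1).hasDerivWithinAt)
    (fun x hx => hA' x hx.1)
  exact h ⟨hv, le_rfl⟩

/-- Milder growth of the second transverse derivative at the horizon for fields with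
vanishing Aretakis quantity (as holds for compact-data solutions): if
`∂_rΦ(v,m) + Φ(v,m)/m = 0` for all `v` and `|Φ(v,m)| ≤ C·v^{-3/5}` for `v ≥ v₁`,
then there is `C' > 0` with `|∂²_rΦ(v,m)| ≤ C'·v^{2/5}` for all `v ≥ v₁`. -/
theorem second_transverse_derivative_milder_growth (m : ℝ) (hm : 0 < m)
    (Φ : ℝ → ℝ → ℝ) (hΦ : ContDiff ℝ (⊤ : ℕ∞) (Function.uncurry Φ))
    (hwave : ∀ v r : ℝ, 0 < r →
      ((r - m) / r) ^ 2 * deriv (deriv (Φ v)) r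
        + 2 * ((r - m) / r ^ 2) * deriv (Φ v) r
        + 2 * deriv (fun w => deriv (Φ w) r) v
        + (2 / r) * deriv (fun w => Φ w r) v = 0)
    (hH₀ : ∀ v : ℝ, deriv (Φ v) m + Φ v m / m = 0)
    (C v₁ : ℝ) (hC : 0 < C) (hv₁ : 0 < v₁)
    (hdecay : ∀ v : ℝ, v₁ ≤ v → |Φ v m| ≤ C * v ^ (-(3 : ℝ) / 5)) :
    ∃ C' : ℝ, 0 < C' ∧
      ∀ v : ℝ, v₁ ≤ v → |deriv (deriv (Φ v)) m| ≤ C' * v ^ ((2 : ℝ) / 5) := by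
  set F : ℝ × ℝ → ℝ := Function.uncurry Φ with hFdef
  have d1 : ∀ v, deriv (Φ v) = fun r => partialR F (v, r) := fun v =>
    funext fun r => (hasDerivAt_partialR hΦ v r).deriv
  have hR := contDiff_partialR hΦ
  have d2 : ∀ v r, deriv (deriv (Φ v)) r = partialR (partialR F) (v, r) := fun v r => by
    rw [d1]; exact (hasDerivAt_partialR hR v r).deriv
  have d3 : ∀ v r, deriv (fun w => deriv (Φ w) r) v = partialV (partialR F) (v, r) :=
    fun v r => by
      simp only [d1]; exact (hasDerivAt_partialV hR v r).deriv
  have d4 : ∀ v r, deriv (fun w => Φ w r) v = partialV F (v, r) := fun v r =>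
    (hasDerivAt_partialV hΦ v r).deriv
  have hA := hasDerivAt_horizon hm hΦ
    (fun v r hr => by
      have h := hwave v r hr
      rwa [d2, d3, d4, d1] at h)
    (fun v => by
      have h := hH₀ v
      rwa [d1] at h)
  set A : ℝ → ℝ := fun w => partialR (partialR F) (w, m) - 2 * F (w, m) / m ^ 2 with hAdef
  have hgrow := fun {v : ℝ} (hv : v₁ ≤ v) =>
    growth_of_deriv_decay (K := C / m ^ 3) hv₁ hA (fun v hv => by
      rw [abs_div, abs_of_pos (pow_pos hm 3), div_mul_eq_mul_div]
      exact div_le_div_of_nonneg_right (hdecay v hv) (pow_pos hm 3).le) hv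
  have hp : 0 < v₁ ^ ((2 : ℝ) / 5) := Real.rpow_pos_of_pos hv₁ _
  refine ⟨|A v₁| / v₁ ^ ((2 : ℝ) / 5) + C / m ^ 3 * (5 / 2) + 2 * (C / v₁) / m ^ 2,
    by positivity, fun v hv => ?_⟩
  have hvpos : 0 < v := hv₁.trans_le hv
  have hpv : v₁ ^ ((2 : ℝ) / 5) ≤ v ^ ((2 : ℝ) / 5) :=
    Real.rpow_le_rpow hv₁.le hv (by norm_num)
  have b1 : |A v₁| ≤ |A v₁| / v₁ ^ ((2 : ℝ) / 5) * v ^ ((2 : ℝ) / 5) := by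
    rw [div_mul_eq_mul_div, le_div_iff₀ hp]
    exact mul_le_mul_of_nonneg_left hpv (abs_nonneg _)
  have b2 : |F (v, m)| ≤ C / v₁ * v ^ ((2 : ℝ) / 5) := by
    refine (hdecay v hv).trans ?_
    have e : v ^ (-(3 : ℝ) / 5) = v ^ ((2 : ℝ) / 5) / v := by
      rw [← Real.rpow_sub_one hvpos.ne']; norm_num
    rw [e, div_mul_eq_mul_div, mul_div_assoc']
    exact div_le_div_of_nonneg_left (by positivity) hv₁ hv
  have b3 : |2 * F (v, m) / m ^ 2| ≤ 2 * (C / v₁) / m ^ 2 * v ^ ((2 : ℝ) / 5) := by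
    rw [abs_div, abs_mul, abs_two, abs_of_pos (pow_pos hm 2), div_mul_eq_mul_div]
    exact div_le_div_of_nonneg_right (by linarith) (pow_pos hm 2).le
  have e : deriv (deriv (Φ v)) m = A v + 2 * F (v, m) / m ^ 2 := by
    rw [d2, hAdef]; ring
  rw [e]
  have := abs_add_le (A v) (2 * F (v, m) / m ^ 2)
  linarith [hgrow hv]
end
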